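/- arXiv:2411.15765 — 4 statements merged into one kernel-verified Lean document; each statement's English description precedes it below -/
import Mathlib

section
/- For every integer k ≥ 1 and every integer d ≥ 2 there exists a connected k-stepwise irregular graph whose diameter equals d. -/
open SimpleGraph Finset

/-- A graph `G` is `k`-stepwise irregular if the degrees of every pair of adjacent
vertices differ by exactly `k`. -/
def IsSI {V : Type*} [Fintype V] (G : SimpleGraph V) [DecidableRel G.Adj] (k : ℕ) : Prop :=
  ∀ ⦃u v : V⦄, G.Adj u v → |(G.degree u : ℤ) - (G.degree v : ℤ)| = (k : ℤ)

/-!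
Replacing every vertex `v` of a connected graph `H` by `k * w v` independent copies multiplies
weighted degrees by `k` and preserves a diameter `≥ 2`. It therefore suffices to find, for each
`d ≥ 2`, a graph of diameter `d` with positive vertex weights whose weighted degrees differ by `1`
along edges. The path of length `d` works, with weights `1, 2, 2, 2, 1, 2, 2, 2, …` for even `d`
and `2, 3, 2, 2, 2, 1, 2, 2, 2, 1, …` for odd `d ≠ 3`. The path of length `3` has no such weights;
there the complete bipartite graph `K₃,₄` minus a matching of size `3` takes over.
-/

section Distance

variable {V W : Type*} {G : SimpleGraph V} {H : SimpleGraph W}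

lemma edist_map_le (f : G →g H) (u v : V) : H.edist (f u) (f v) ≤ G.edist u v := by
  rw [G.edist_eq_sInf]
  refine le_sInf ?_
  rintro _ ⟨p, rfl⟩
  simpa using edist_le (p.map f)

lemma ediam_le_of_surjective (f : G →g H) (hf : Function.Surjective f) : H.ediam ≤ G.ediam :=
  ediam_le_of_edist_le <| hf.forall₂.2 fun u v ↦ (edist_map_le f u v).trans edist_le_ediam

lemma ediam_eq_of_iso (e : G ≃g H) : G.ediam = H.ediam :=
  le_antisymm (ediam_le_of_surjective e.symm.toHom e.symm.surjective)
    (ediam_le_of_surjective e.toHom e.surjective)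

lemma le_add_length_of_forall_adj {f : V → ℕ} (hf : ∀ u v, G.Adj u v → f v ≤ f u + 1) {u v : V}
    (p : G.Walk u v) : f v ≤ f u + p.length := by
  induction p with
  | nil => simp
  | cons h p ih =>
    have := hf _ _ h
    rw [Walk.length_cons]
    omega

lemma le_add_edist_of_forall_adj {f : V → ℕ} (hf : ∀ u v, G.Adj u v → f v ≤ f u + 1) (u v : V) :
    (f v : ℕ∞) ≤ f u + G.edist u v := by
  by_cases h : G.edist u v = ⊤
  · simp [h]
  · obtain ⟨p, hp⟩ := exists_walk_of_edist_ne_top h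
    rw [← hp]
    exact_mod_cast le_add_length_of_forall_adj hf p

end Distance

section Path

lemma edist_pathGraph_le {n : ℕ} {u v : Fin n} (huv : u ≤ v) :
    (pathGraph n).edist u v ≤ (v.val - u.val : ℕ) := by
  obtain ⟨m, hm⟩ := Nat.exists_eq_add_of_le (Fin.le_def.1 huv)
  rw [hm, Nat.add_sub_cancel_left]
  induction m generalizing v with
  | zero => simp [Fin.ext (a := u) (b := v) hm.symm]
  | succ m ih =>
    let x : Fin n := ⟨u.val + m, by omega⟩
    have hxv : (pathGraph n).edist x v = 1 := edist_eq_one_iff_adj.2 <| pathGraph_adj.2 <|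
      .inl hm.symm
    calc (pathGraph n).edist u v
        ≤ (pathGraph n).edist u x + (pathGraph n).edist x v := SimpleGraph.edist_triangle
      _ ≤ (m + 1 : ℕ) := by
        rw [hxv, Nat.cast_succ]
        gcongr
        exact ih (Fin.le_def.2 (Nat.le_add_right _ _)) rfl

lemma ediam_pathGraph (d : ℕ) : (pathGraph (d + 1)).ediam = d := by
  refine le_antisymm (ediam_le_of_edist_le fun u v ↦ ?_) ?_
  · wlog huv : u ≤ v generalizing u v
    · rw [edist_comm]
      exact this v u (le_of_not_ge huv)
    · exact (edist_pathGraph_le huv).trans (by norm_cast; omega)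
  · have hval : ∀ u v : Fin (d + 1), (pathGraph (d + 1)).Adj u v → v.val ≤ u.val + 1 := by
      intro u v huv
      rw [pathGraph_adj] at huv
      omega
    calc (d : ℕ∞) ≤ (pathGraph (d + 1)).edist 0 (Fin.last d) := by
          simpa using le_add_edist_of_forall_adj hval 0 (Fin.last d)
      _ ≤ (pathGraph (d + 1)).ediam := edist_le_ediam

end Path

section Weights

variable {V : Type*} [Fintype V]

/-- The sum of the weights of the neighbours of a vertex: up to a factor `k`, its degree after
every vertex `u` has been replaced by `k * w u` copies. -/
def weightedDegree (H : SimpleGraph V) [DecidableRel H.Adj] (w : V → ℕ) (v : V) : ℕ :=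
  ∑ u ∈ H.neighborFinset v, w u

/-- The analogue of `IsSI` for vertex-weighted graphs: weighted degrees of adjacent vertices
differ by exactly `k`. -/
def IsWeightedSI (H : SimpleGraph V) [DecidableRel H.Adj] (w : V → ℕ) (k : ℕ) : Prop :=
  ∀ ⦃u v : V⦄, H.Adj u v → |(weightedDegree H w u : ℤ) - weightedDegree H w v| = k

lemma weightedDegree_const_mul (H : SimpleGraph V) [DecidableRel H.Adj] (w : V → ℕ) (c : ℕ)
    (v : V) : weightedDegree H (fun u ↦ c * w u) v = c * weightedDegree H w v :=
  (mul_sum _ _ _).symm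

lemma IsWeightedSI.const_mul {H : SimpleGraph V} [DecidableRel H.Adj] {w : V → ℕ} {k : ℕ}
    (hw : IsWeightedSI H w k) (c : ℕ) : IsWeightedSI H (fun v ↦ c * w v) (c * k) := by
  intro u v huv
  simp only [weightedDegree_const_mul, Nat.cast_mul]
  rw [← mul_sub, abs_mul, hw huv, Nat.abs_cast]

end Weights

section Blowup

variable {V : Type*}

/-- The blow-up of a graph `H`: each vertex `v` is replaced by an independent set `F v`, and each
edge by a complete bipartite graph. -/
abbrev blowup (H : SimpleGraph V) (F : V → Type*) : SimpleGraph (Σ v, F v) :=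
  H.comap Sigma.fst

variable (H : SimpleGraph V) (F : V → Type*)

lemma degree_blowup [Fintype V] [DecidableRel H.Adj] [∀ v, Fintype (F v)] (x : Σ v, F v) :
    (blowup H F).degree x = weightedDegree H (fun v ↦ Fintype.card (F v)) x.1 := by
  have hN : (blowup H F).neighborFinset x = (H.neighborFinset x.1).sigma fun _ ↦ univ := by
    ext y
    simp
  rw [← card_neighborFinset_eq_degree, hN, card_sigma]
  rfl

lemma isSI_blowup [Fintype V] [DecidableRel H.Adj] [∀ v, Fintype (F v)] {k : ℕ}
    (hH : IsWeightedSI H (fun v ↦ Fintype.card (F v)) k) : IsSI (blowup H F) k := by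
  intro x y hxy
  rw [degree_blowup, degree_blowup]
  exact hH hxy

variable [∀ v, Nonempty (F v)]

-- `x` and `y` lie in a common transversal of the classes, which induces a copy of `H`.
lemma edist_blowup_le {x y : Σ v, F v} (hxy : x.1 ≠ y.1) :
    (blowup H F).edist x y ≤ H.edist x.1 y.1 := by
  classical
  let s : ∀ v, F v :=
    Function.update (Function.update (fun _ ↦ Classical.arbitrary _) x.1 x.2) y.1 y.2
  let f : H →g blowup H F := ⟨fun v ↦ ⟨v, s v⟩, id⟩
  have hx : f x.1 = x := congrArg (Sigma.mk x.1) (by simp [s, hxy])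
  have hy : f y.1 = y := congrArg (Sigma.mk y.1) (by simp [s])
  simpa only [hx, hy] using edist_map_le f x.1 y.1

lemma edist_blowup_le_two {x y : Σ v, F v} (hxy : x.1 = y.1) {v : V} (hv : H.Adj x.1 v) :
    (blowup H F).edist x y ≤ 2 := by
  let z : Σ v, F v := ⟨v, Classical.arbitrary _⟩
  have hxz : (blowup H F).Adj x z := hv
  have hzy : (blowup H F).Adj z y := by simpa [z, ← hxy] using hv.symm
  exact edist_le (.cons hxz (.cons hzy .nil))

lemma ediam_blowup (hH : 2 ≤ H.ediam) : (blowup H F).ediam = H.ediam := by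
  refine le_antisymm ?_ <| ediam_le_of_surjective (Hom.comap Sigma.fst H) Sigma.fst_surjective
  obtain htop | htop := eq_or_ne H.ediam ⊤
  · exact htop ▸ le_top
  refine ediam_le_of_edist_le fun x y ↦ ?_
  by_cases hxy : x.1 = y.1
  · have : Nontrivial V := nontrivial_of_ediam_ne_zero (zero_lt_two.trans_le hH).ne'
    obtain ⟨v, hv⟩ := (preconnected_of_ediam_ne_top htop).exists_adj_of_nontrivial x.1
    exact (edist_blowup_le_two H F hxy hv).trans hH
  · exact (edist_blowup_le H F hxy).trans edist_le_ediam

end Blowup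

section Transfer

variable {V : Type*} [Fintype V]

lemma IsSI.of_iso {W : Type*} [Fintype W] {G : SimpleGraph V} {H : SimpleGraph W}
    [DecidableRel G.Adj] [DecidableRel H.Adj] {k : ℕ} (hG : IsSI G k) (e : G ≃g H) :
    IsSI H k := by
  intro u v huv
  rw [← e.symm.degree_eq u, ← e.symm.degree_eq v]
  exact hG (e.symm.map_adj_iff.2 huv)

lemma IsSI.exists_fin {G : SimpleGraph V} [DecidableRel G.Adj] {k : ℕ} (hG : IsSI G k)
    (hconn : G.Connected) :
    ∃ (n : ℕ) (G' : SimpleGraph (Fin n)) (_ : DecidableRel G'.Adj),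
      G'.Connected ∧ IsSI G' k ∧ G'.diam = G.diam := by
  classical
  let e := G.overFinIso rfl
  exact ⟨_, G.overFin rfl, Classical.decRel _, e.connected_iff.1 hconn, hG.of_iso e,
    congrArg ENat.toNat (ediam_eq_of_iso e).symm⟩

lemma IsWeightedSI.exists_isSI {H : SimpleGraph V} [DecidableRel H.Adj] {w : V → ℕ}
    (hw : IsWeightedSI H w 1) (hpos : ∀ v, 0 < w v) {k d : ℕ} (hk : 1 ≤ k) (hd : 2 ≤ d)
    (hdiam : H.ediam = d) :
    ∃ (n : ℕ) (G : SimpleGraph (Fin n)) (_ : DecidableRel G.Adj),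
      G.Connected ∧ IsSI G k ∧ G.diam = d := by
  let F : V → Type := fun v ↦ Fin (k * w v)
  have hF : ∀ v, Nonempty (F v) := fun v ↦ Fin.pos_iff_nonempty.1 (Nat.mul_pos hk (hpos v))
  have hSI : IsSI (blowup H F) k := isSI_blowup H F (by simpa [F] using hw.const_mul k)
  have hblow : (blowup H F).ediam = d := by
    rw [ediam_blowup H F (by rw [hdiam]; exact_mod_cast hd), hdiam]
  have : Nontrivial (Σ v, F v) := nontrivial_of_ediam_ne_zero (by rw [hblow]; norm_cast; omega)
  have hconn : (blowup H F).Connected := connected_of_ediam_ne_top (by simp [hblow])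
  simpa [diam, hblow] using hSI.exists_fin hconn

end Transfer

section PathWeights

variable {d : ℕ} [DecidableRel (pathGraph (d + 1)).Adj]

lemma weightedDegree_pathGraph (w : ℕ → ℕ) (i : Fin (d + 1)) :
    weightedDegree (pathGraph (d + 1)) (fun j ↦ w j) i =
      (if 0 < i.val then w (i - 1) else 0) + (if i.val < d then w (i + 1) else 0) := by
  have hN : ((pathGraph (d + 1)).neighborFinset i).map Fin.valEmbedding =
      (if 0 < i.val then {i.val - 1} else ∅) ∪ (if i.val < d then {i.val + 1} else ∅) := by
    ext j
    simp only [mem_map, mem_neighborFinset, pathGraph_adj, Fin.valEmbedding_apply, Fin.exists_iff,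
      exists_and_left, exists_prop, exists_eq_right_right, mem_union]
    split_ifs <;> grind
  calc weightedDegree (pathGraph (d + 1)) (fun j ↦ w j) i
      = ∑ j ∈ ((pathGraph (d + 1)).neighborFinset i).map Fin.valEmbedding, w j := by
        rw [sum_map]
        rfl
    _ = _ := by
        rw [hN, sum_union (by split_ifs <;> simp)]
        congr 1 <;> split_ifs <;> simp

/-- The `4`-periodic weights `1, 2, 2, 2, …` used on paths of even length. -/
def evenPathWeight (i : ℕ) : ℕ := if i % 4 = 0 then 1 else 2

/-- The weights `2, 3, 2, 2, 2, 1, 2, 2, 2, 1, …` used on paths of odd length, `4`-periodic except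
for the entry `3`. -/
def oddPathWeight (i : ℕ) : ℕ := if i = 1 then 3 else if i % 4 = 1 then 1 else 2

lemma evenPathWeight_pos (i : ℕ) : 0 < evenPathWeight i := by
  unfold evenPathWeight
  split_ifs <;> omega

lemma oddPathWeight_pos (i : ℕ) : 0 < oddPathWeight i := by
  unfold oddPathWeight
  split_ifs <;> omega

lemma weightedDegree_evenPathWeight (hd : Even d) (hd₀ : d ≠ 0) (i : Fin (d + 1)) :
    weightedDegree (pathGraph (d + 1)) (fun j ↦ evenPathWeight j) i =
      if i.val % 2 = 1 then 3 else if i.val = 0 ∨ i.val = d then 2 else 4 := by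
  rw [Nat.even_iff] at hd
  rw [weightedDegree_pathGraph]
  unfold evenPathWeight
  split_ifs <;> omega

lemma weightedDegree_oddPathWeight (hd : Odd d) (i : Fin (d + 1)) :
    weightedDegree (pathGraph (d + 1)) (fun j ↦ oddPathWeight j) i =
      if i.val % 2 = 0 then (if i.val = 2 then 5 else 3) else (if i.val = d then 2 else 4) := by
  rw [Nat.odd_iff] at hd
  rw [weightedDegree_pathGraph]
  unfold oddPathWeight
  split_ifs <;> omega

lemma isWeightedSI_evenPathWeight (hd : Even d) (hd₀ : d ≠ 0) :
    IsWeightedSI (pathGraph (d + 1)) (fun j ↦ evenPathWeight j) 1 := by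
  intro u v huv
  rw [pathGraph_adj] at huv
  rw [weightedDegree_evenPathWeight hd hd₀, weightedDegree_evenPathWeight hd hd₀, Nat.cast_one,
    abs_eq zero_le_one]
  split_ifs <;> omega

lemma isWeightedSI_oddPathWeight (hd : Odd d) (hd₃ : d ≠ 3) :
    IsWeightedSI (pathGraph (d + 1)) (fun j ↦ oddPathWeight j) 1 := by
  intro u v huv
  rw [pathGraph_adj] at huv
  rw [weightedDegree_oddPathWeight hd, weightedDegree_oddPathWeight hd, Nat.cast_one,
    abs_eq zero_le_one]
  rw [Nat.odd_iff] at hd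
  split_ifs <;> omega

end PathWeights

section DiameterThree

/-- The complete bipartite graph `K₃,₄` minus a matching of size `3`: a vertex `i` of the first
part and its partner `some i` in the second part are the pairs at distance `3`. -/
def bipartiteMinusMatching : SimpleGraph (Fin 3 ⊕ Option (Fin 3)) :=
  SimpleGraph.fromRel fun u v ↦ ∃ i x, u = .inl i ∧ v = .inr x ∧ x ≠ some i

instance : DecidableRel bipartiteMinusMatching.Adj := fun _ _ ↦
  inferInstanceAs (Decidable (_ ∧ _))

/-- Vertex weights for which the weighted degrees in `bipartiteMinusMatching` are `5` on the first
part, `4` on the matched vertices of the second part and `6` at its unmatched vertex. -/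
def bipartiteMinusMatchingWeight : Fin 3 ⊕ Option (Fin 3) → ℕ
  | .inr none => 1
  | _ => 2

lemma edist_bipartiteMinusMatching_le (u v : Fin 3 ⊕ Option (Fin 3)) :
    bipartiteMinusMatching.edist u v ≤ 3 := by
  have hwalk : ∀ u v, ∃ x y, (bipartiteMinusMatching.Adj u x ∨ u = x) ∧
      (bipartiteMinusMatching.Adj x y ∨ x = y) ∧ (bipartiteMinusMatching.Adj y v ∨ y = v) := by
    decide
  obtain ⟨x, y, hux, hxy, hyv⟩ := hwalk u v
  rw [← edist_le_one_iff_adj_or_eq] at hux hxy hyv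
  calc bipartiteMinusMatching.edist u v
      ≤ bipartiteMinusMatching.edist u x + bipartiteMinusMatching.edist x v :=
        SimpleGraph.edist_triangle
    _ ≤ bipartiteMinusMatching.edist u x +
        (bipartiteMinusMatching.edist x y + bipartiteMinusMatching.edist y v) := by
        gcongr
        exact SimpleGraph.edist_triangle
    _ ≤ 1 + (1 + 1) := by gcongr
    _ = 3 := by norm_num

lemma two_lt_edist_bipartiteMinusMatching (i : Fin 3) :
    2 < bipartiteMinusMatching.edist (.inl i) (.inr (some i)) := by
  rw [two_lt_edist_iff, Set.eq_empty_iff_forall_notMem]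
  simp only [mem_commonNeighbors]
  decide +revert

lemma ediam_bipartiteMinusMatching : bipartiteMinusMatching.ediam = 3 :=
  le_antisymm (ediam_le_of_edist_le edist_bipartiteMinusMatching_le) <|
    (Order.add_one_le_of_lt (two_lt_edist_bipartiteMinusMatching 0)).trans edist_le_ediam

lemma isWeightedSI_bipartiteMinusMatching :
    IsWeightedSI bipartiteMinusMatching bipartiteMinusMatchingWeight 1 := by
  unfold IsWeightedSI
  decide

end DiameterThree

/-- For any `k ≥ 1` and any `d ≥ 2` there exists a connected `k`-stepwise irregular
graph of diameter `d`. -/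
theorem exists_ksi_of_diam (k d : ℕ) (hk : 1 ≤ k) (hd : 2 ≤ d) :
    ∃ (n : ℕ) (G : SimpleGraph (Fin n)) (_ : DecidableRel G.Adj),
      G.Connected ∧ IsSI G k ∧ G.diam = d := by
  classical
  obtain heven | hodd := Nat.even_or_odd d
  · exact (isWeightedSI_evenPathWeight heven (by omega)).exists_isSI
      (fun i ↦ evenPathWeight_pos i) hk hd (ediam_pathGraph d)
  · obtain rfl | hd₃ := eq_or_ne d 3
    · exact isWeightedSI_bipartiteMinusMatching.exists_isSI (by decide) hk hd
        ediam_bipartiteMinusMatching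
    · exact (isWeightedSI_oddPathWeight hodd hd₃).exists_isSI
        (fun i ↦ oddPathWeight_pos i) hk hd (ediam_pathGraph d)
end

section
/- Let k ≥ 1 be an integer. If G is a k-stepwise irregular unicyclic graph (a connected graph whose number of edges equals its number of vertices), then the diameter of G is even. -/
open SimpleGraph Finset

/-!
The parity of `⌊deg x / k⌋` is a proper 2-colouring, so `G` is bipartite and, seen from a root `v`,
every edge joins consecutive distance layers. Each vertex other than `v` has a neighbour in the
previous layer, and there are at most `|V|` edges, so at most one vertex has more than one such
neighbour, and it then has two. Hence a vertex `u` farthest from `v` has degree one or two. If its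
degree were two, some neighbour `w ≠ v` of `u` would have a single neighbour in the layer before it
and, in the layer after it, besides `u` only leaves. There is such a leaf, as otherwise
`deg w = 2 = deg u`. But the degrees of two neighbours of `w` have the same parity. So both ends of
a diametral pair are leaves; they have the same colour, and their distance is even.
-/

theorem dist_ne_dist_of_adj {V : Type*} {G : SimpleGraph V} (hG : G.IsBipartite) {v x y : V}
    (hvx : G.Reachable v x) (hxy : G.Adj x y) : G.dist v x ≠ G.dist v y := by
  let c : G.Coloring Bool := hG.toColoring (by simp)
  obtain ⟨p, hp⟩ := hvx.exists_walk_length_eq_dist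
  obtain ⟨q, hq⟩ := (hvx.trans hxy.reachable).exists_walk_length_eq_dist
  intro heq
  have hcolor := (c.even_length_iff_congr p).symm.trans
    ((by rw [hp, hq, heq] : Even p.length ↔ Even q.length).trans (c.even_length_iff_congr q))
  exact c.valid hxy (Bool.eq_iff_iff.2 (by tauto))

section Layers

variable {V : Type*} [Fintype V] (G : SimpleGraph V) [DecidableRel G.Adj]

/-- The neighbours of `x` closer to the root `v` than `x`. In a bipartite graph they all lie in the
previous distance layer. -/
noncomputable def parents (v x : V) : Finset V :=
  {y ∈ G.neighborFinset x | G.dist v y < G.dist v x}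

/-- The neighbours of `x` farther from the root `v` than `x`. In a bipartite graph each neighbour
of `x` is either a parent or a child. -/
noncomputable def children (v x : V) : Finset V :=
  {y ∈ G.neighborFinset x | G.dist v x < G.dist v y}

variable {G} {u v w x y : V}

theorem mem_parents : y ∈ parents G v x ↔ G.Adj x y ∧ G.dist v y < G.dist v x := by
  simp only [parents, mem_filter, mem_neighborFinset]

theorem mem_children : y ∈ children G v x ↔ G.Adj x y ∧ G.dist v x < G.dist v y := by
  simp only [children, mem_filter, mem_neighborFinset]

theorem mem_children_iff_mem_parents : y ∈ children G v x ↔ x ∈ parents G v y := by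
  rw [mem_children, mem_parents, G.adj_comm]

theorem dist_eq_of_mem_children (hy : y ∈ children G v x) : G.dist v y = G.dist v x + 1 := by
  obtain ⟨hxy, hlt⟩ := mem_children.1 hy
  have := hxy.diff_dist_adj (u := v)
  omega

theorem parents_self : parents G v v = ∅ := by
  simp only [parents, SimpleGraph.dist_self, Nat.not_lt_zero, filter_false]

theorem parents_nonempty (hvx : G.Reachable v x) (hne : x ≠ v) : (parents G v x).Nonempty := by
  obtain ⟨p, hp⟩ := hvx.symm.exists_walk_length_eq_dist
  cases p with
  | nil => exact absurd rfl hne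
  | @cons _ y _ hxy p =>
    refine ⟨y, mem_parents.2 ⟨hxy, ?_⟩⟩
    rw [dist_comm, dist_comm (u := v), ← hp, Walk.length_cons]
    exact Nat.lt_succ_of_le (dist_le p)

theorem card_parents_add_card_children (hG : G.IsBipartite) (hvx : G.Reachable v x) :
    #(parents G v x) + #(children G v x) = G.degree x := by
  have hchildren : children G v x = {y ∈ G.neighborFinset x | ¬ G.dist v y < G.dist v x} :=
    filter_congr fun y hy => by
      have := dist_ne_dist_of_adj hG hvx ((G.mem_neighborFinset x y).1 hy)
      omega
  rw [hchildren, parents, card_filter_add_card_filter_not, card_neighborFinset_eq_degree]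

theorem sum_card_parents_eq_sum_card_children :
    ∑ x, #(parents G v x) = ∑ x, #(children G v x) := by
  simp only [card_eq_sum_ones]
  exact sum_comm' fun x y => by
    simp only [mem_univ, true_and, and_true, mem_children_iff_mem_parents]

theorem sum_card_parents (hG : G.IsBipartite) (hconn : G.Connected) (v : V) :
    ∑ x, #(parents G v x) = #G.edgeFinset := by
  have hdeg : ∑ x, #(parents G v x) + ∑ x, #(children G v x) = 2 * #G.edgeFinset := by
    rw [← sum_add_distrib, ← G.sum_degrees_eq_twice_card_edges]
    exact sum_congr rfl fun x _ => card_parents_add_card_children hG (hconn v x)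
  rw [← sum_card_parents_eq_sum_card_children] at hdeg
  omega

-- The root has no parents and contributes `0 - 1 = 0` to the sum.
theorem sum_card_parents_sub_one_add_card (hG : G.IsBipartite) (hconn : G.Connected) (v : V) :
    ∑ x, (#(parents G v x) - 1) + Fintype.card V = #G.edgeFinset + 1 := by
  classical
  have hterm (x : V) : #(parents G v x) - 1 + 1 = #(parents G v x) + if x = v then 1 else 0 := by
    split_ifs with hx
    · rw [hx, parents_self, card_empty]
    · exact Nat.sub_add_cancel (parents_nonempty (hconn v x) hx).card_pos
  calc ∑ x, (#(parents G v x) - 1) + Fintype.card V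
      = ∑ x, (#(parents G v x) - 1 + 1) := by
        rw [sum_add_distrib, ← card_eq_sum_ones, card_univ]
    _ = #G.edgeFinset + 1 := by
        simp only [hterm, sum_add_distrib, sum_card_parents hG hconn, sum_ite_eq', mem_univ,
          if_true]

theorem card_parents_le_two (hG : G.IsBipartite) (hconn : G.Connected)
    (hcard : #G.edgeFinset ≤ Fintype.card V) (v x : V) : #(parents G v x) ≤ 2 := by
  have hsum := sum_card_parents_sub_one_add_card hG hconn v
  have hx := single_le_sum_of_canonicallyOrdered (f := fun z => #(parents G v z) - 1) (mem_univ x)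
  omega

theorem card_parents_le_one_of_ne (hG : G.IsBipartite) (hconn : G.Connected)
    (hcard : #G.edgeFinset ≤ Fintype.card V) (hx : #(parents G v x) = 2) (hyx : y ≠ x) :
    #(parents G v y) ≤ 1 := by
  have hsum := sum_card_parents_sub_one_add_card hG hconn v
  have hxy := add_le_sum (f := fun z => #(parents G v z) - 1) (fun _ _ => Nat.zero_le _)
    (mem_univ x) (mem_univ y) hyx.symm
  omega

theorem degree_eq_card_parents_of_forall_dist_le (hG : G.IsBipartite) (hvx : G.Reachable v x)
    (hfar : ∀ y, G.dist v y ≤ G.dist v x) : G.degree x = #(parents G v x) := by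
  have hchildren : children G v x = ∅ := filter_false_of_mem fun y _ => (hfar y).not_gt
  rw [← card_parents_add_card_children hG hvx, hchildren, card_empty, add_zero]

theorem degree_eq_one_of_mem_children_of_mem_children (hG : G.IsBipartite) (hconn : G.Connected)
    (hcard : #G.edgeFinset ≤ Fintype.card V) (hfar : ∀ y, G.dist v y ≤ G.dist v u)
    (htwo : #(parents G v u) = 2) (hu : u ∈ children G v w) (hx : x ∈ children G v w)
    (hxu : x ≠ u) : G.degree x = 1 := by
  have hdist : G.dist v x = G.dist v u := by
    rw [dist_eq_of_mem_children hx, dist_eq_of_mem_children hu]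
  rw [degree_eq_card_parents_of_forall_dist_le hG (hconn v x) (hdist ▸ hfar)]
  exact (card_parents_le_one_of_ne hG hconn hcard htwo hxu).antisymm
    (card_pos.2 ⟨w, mem_children_iff_mem_parents.1 hx⟩)

end Layers

namespace IsSI

variable {V : Type*} [Fintype V] {G : SimpleGraph V} [DecidableRel G.Adj] {k : ℕ} {u v w x y : V}

theorem degree_eq_add_or (h : IsSI G k) (hxy : G.Adj x y) :
    G.degree x = G.degree y + k ∨ G.degree y = G.degree x + k := by
  have := eq_or_eq_neg_of_abs_eq (h hxy)
  omega

/-- The proper 2-colouring of a `k`-stepwise irregular graph by the parity of `⌊deg x / k⌋`. -/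
def coloring (h : IsSI G k) (hk : 1 ≤ k) : G.Coloring Bool :=
  Coloring.mk (fun x => decide (Even (G.degree x / k))) fun {x y} hxy => by
    rcases h.degree_eq_add_or hxy with hdeg | hdeg <;>
      simp only [hdeg, Nat.add_div_right _ hk, ne_eq, decide_eq_decide, Nat.even_add_one] <;>
      tauto

theorem isBipartite (h : IsSI G k) (hk : 1 ≤ k) : G.IsBipartite :=
  (h.coloring hk).colorable

theorem even_dist_of_degree_eq (h : IsSI G k) (hk : 1 ≤ k) (hxy : G.Reachable x y)
    (hdeg : G.degree x = G.degree y) : Even (G.dist x y) := by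
  obtain ⟨p, hp⟩ := hxy.exists_walk_length_eq_dist
  have hcolor : h.coloring hk x = h.coloring hk y :=
    congrArg (fun d => decide (Even (d / k))) hdeg
  rw [← hp, (h.coloring hk).even_length_iff_congr p, hcolor]

theorem even_degree_iff_of_adj_of_adj (h : IsSI G k) (hx : G.Adj w x) (hy : G.Adj w y) :
    Even (G.degree x) ↔ Even (G.degree y) := by
  have := h.degree_eq_add_or hx
  have := h.degree_eq_add_or hy
  simp only [Nat.even_iff]
  omega

theorem degree_eq_one_of_forall_dist_le (h : IsSI G k) (hk : 1 ≤ k) (hconn : G.Connected)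
    (hcard : #G.edgeFinset ≤ Fintype.card V) (huv : u ≠ v)
    (hfar : ∀ y, G.dist v y ≤ G.dist v u) : G.degree u = 1 := by
  have hG := h.isBipartite hk
  have hdegu := degree_eq_card_parents_of_forall_dist_le hG (hconn v u) hfar
  have hpos := (parents_nonempty (hconn v u) huv).card_pos
  have hle := card_parents_le_two hG hconn hcard v u
  by_contra hne
  have htwo : #(parents G v u) = 2 := by omega
  obtain ⟨w, hwu, hwv⟩ := exists_mem_ne (by omega : 1 < #(parents G v u)) v
  have huw : u ∈ children G v w := mem_children_iff_mem_parents.2 hwu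
  have hadj : G.Adj w u := (mem_children.1 huw).1
  have hparent : #(parents G v w) = 1 :=
    (card_parents_le_one_of_ne hG hconn hcard htwo hadj.ne).antisymm
      (parents_nonempty (hconn v w) hwv).card_pos
  have hchildren : 1 < #(children G v w) := by
    have hpos := card_pos.2 ⟨u, huw⟩
    have hdegw := card_parents_add_card_children hG (hconn v w)
    have hstep := h.degree_eq_add_or hadj
    omega
  obtain ⟨x, hxw, hxu⟩ := exists_mem_ne hchildren u
  have hdegx : G.degree x = 1 :=
    degree_eq_one_of_mem_children_of_mem_children hG hconn hcard hfar htwo huw hxw hxu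
  have heven := h.even_degree_iff_of_adj_of_adj hadj (mem_children.1 hxw).1
  rw [hdegu, htwo, hdegx] at heven
  exact absurd (heven.1 even_two) Nat.not_even_one

end IsSI

theorem ksi_unicyclic_even_diam_general {V : Type*} [Fintype V]
    (G : SimpleGraph V) [DecidableRel G.Adj] (k : ℕ) (hk : 1 ≤ k) (hconn : G.Connected)
    (hcard : #G.edgeFinset ≤ Fintype.card V) (hSI : IsSI G k) : Even G.diam := by
  have := hconn.nonempty
  obtain ⟨u, v, huv⟩ := G.exists_dist_eq_diam
  have hdiam (x y : V) : G.dist x y ≤ G.dist u v :=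
    huv ▸ dist_le_diam (connected_iff_ediam_ne_top.1 hconn)
  rw [← huv]
  rcases eq_or_ne u v with rfl | hne
  · rw [SimpleGraph.dist_self]
    exact Even.zero
  have hu : G.degree u = 1 :=
    hSI.degree_eq_one_of_forall_dist_le hk hconn hcard hne fun y => dist_comm (u := u) ▸ hdiam v y
  have hv : G.degree v = 1 :=
    hSI.degree_eq_one_of_forall_dist_le hk hconn hcard hne.symm (hdiam u)
  exact hSI.even_dist_of_degree_eq hk (hconn u v) (hu.trans hv.symm)

/-- A `k`-stepwise irregular unicyclic graph (connected, with as many edges as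
vertices) has even diameter. -/
theorem ksi_unicyclic_even_diam {V : Type*} [Fintype V] [DecidableEq V]
    (G : SimpleGraph V) [DecidableRel G.Adj]
    (k : ℕ) (hk : 1 ≤ k) (hconn : G.Connected)
    (huni : G.edgeFinset.card = Fintype.card V) (hSI : IsSI G k) :
    Even G.diam :=
  ksi_unicyclic_even_diam_general G k hk hconn huni.le hSI
end

section
/- Let k ≥ 1 be an integer and let G be a k-stepwise irregular graph on n vertices with at least one edge, maximum degree Δ = Δ(G) and m edges. Then m = n·Δ·(Δ − k)/(2Δ − k) holds if and only if G has exactly two distinct vertex degrees. -/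
open SimpleGraph Finset

/-!
Every non-isolated vertex `v` lies on `deg v` edges, so the edge sums `1 / deg u + 1 / deg v` add up
to the number of non-isolated vertices. In a `k`-stepwise irregular graph the edge sum is
`1 / (x - k) + 1 / x`, where `x ≤ Δ` is the larger of the two degrees; this is strictly decreasing
in `x`, so `m * (1 / (Δ - k) + 1 / Δ) ≤ n`, with equality exactly when no vertex is isolated and
every edge has an end of degree `Δ`, that is, when the degrees are `Δ` and `Δ - k`.
-/

lemma eq_mul_mul_div_add_iff {K : Type*} [Field K] {m n x y : K} (hx : x ≠ 0) (hy : y ≠ 0)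
    (hxy : x + y ≠ 0) :
    m = n * x * y / (x + y) ↔ m * (y⁻¹ + x⁻¹) = n := by
  rw [inv_add_inv hy hx, eq_div_iff hxy, add_comm y x, mul_div_assoc',
    div_eq_iff (mul_ne_zero hy hx), mul_assoc n, mul_comm x y]

lemma strictAntiOn_inv_sub_add_inv {K : Type*} [Field K] [LinearOrder K] [IsStrictOrderedRing K]
    {k : K} (hk : 0 ≤ k) :
    StrictAntiOn (fun x ↦ (x - k)⁻¹ + x⁻¹) (Set.Ioi k) := fun _ hx _ _ hxy ↦
  add_lt_add (inv_strictAnti₀ (sub_pos.2 hx) (sub_lt_sub_right hxy k))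
    (inv_strictAnti₀ (hk.trans_lt hx) hxy)

section DartSum

variable {V : Type*} [Fintype V] (G : SimpleGraph V) [DecidableRel G.Adj]

lemma sum_dart_fst {M : Type*} [AddCommMonoid M] (f : V → M) :
    ∑ d : G.Dart, f d.fst = ∑ v, G.degree v • f v := by
  classical
  simp_rw [← G.dart_fst_fiber_card_eq_degree]
  rw [← sum_fiberwise univ (fun d : G.Dart ↦ d.fst)]
  exact sum_congr rfl fun v _ ↦ sum_eq_card_nsmul fun d hd ↦ by rw [(mem_filter.1 hd).2]

lemma sum_dart_snd {M : Type*} [AddCommMonoid M] (f : V → M) :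
    ∑ d : G.Dart, f d.snd = ∑ v, G.degree v • f v :=
  (Dart.symm_involutive.bijective.sum_comp fun d : G.Dart ↦ f d.fst).trans (sum_dart_fst G f)

lemma sum_dart_inv_degree_add_inv_degree {K : Type*} [DivisionSemiring K] [CharZero K] :
    ∑ d : G.Dart, ((G.degree d.fst : K)⁻¹ + (G.degree d.snd : K)⁻¹) =
      2 * #{v | 0 < G.degree v} := by
  have hvertex (v : V) :
      G.degree v • (G.degree v : K)⁻¹ = if 0 < G.degree v then 1 else 0 := by
    split_ifs with h
    · rw [nsmul_eq_mul, mul_inv_cancel₀ (Nat.cast_ne_zero.2 h.ne')]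
    · rw [Nat.eq_zero_of_not_pos h, zero_nsmul]
  rw [sum_add_distrib, sum_dart_fst G fun v ↦ (G.degree v : K)⁻¹,
    sum_dart_snd G fun v ↦ (G.degree v : K)⁻¹, ← two_mul, sum_congr rfl fun v _ ↦ hvertex v,
    sum_boole]

lemma card_edgeFinset_mul_eq_card_iff {K : Type*} [Field K] [LinearOrder K] [IsStrictOrderedRing K]
    {c : K} (hc : ∀ ⦃u v⦄, G.Adj u v → c ≤ (G.degree u : K)⁻¹ + (G.degree v : K)⁻¹) :
    #G.edgeFinset * c = Fintype.card V ↔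
      (∀ v, 0 < G.degree v) ∧
        ∀ ⦃u v⦄, G.Adj u v → c = (G.degree u : K)⁻¹ + (G.degree v : K)⁻¹ := by
  have hdart : ∀ d ∈ (univ : Finset G.Dart), c ≤ (G.degree d.fst : K)⁻¹ + (G.degree d.snd : K)⁻¹ :=
    fun d _ ↦ hc d.adj
  have hsum_const : ∑ _d : G.Dart, c = 2 * (#G.edgeFinset * c) := by
    rw [sum_const, card_univ, dart_card_eq_twice_card_edges, nsmul_eq_mul, Nat.cast_mul,
      Nat.cast_ofNat, mul_assoc]
  have hedges : #G.edgeFinset * c = #{v | 0 < G.degree v} ↔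
      ∀ ⦃u v⦄, G.Adj u v → c = (G.degree u : K)⁻¹ + (G.degree v : K)⁻¹ := by
    rw [← mul_right_inj' (two_ne_zero (α := K)), ← hsum_const,
      ← sum_dart_inv_degree_add_inv_degree, sum_eq_sum_iff_of_le hdart]
    exact ⟨fun h u v huv ↦ h ⟨(u, v), huv⟩ (mem_univ _), fun h d _ ↦ h d.adj⟩
  have hvertices : (#{v | 0 < G.degree v} : K) = Fintype.card V ↔ ∀ v, 0 < G.degree v := by
    rw [Nat.cast_inj, ← card_univ, card_filter_eq_iff]
    simp only [mem_univ, true_imp_iff]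
  have hle_edges : #G.edgeFinset * c ≤ #{v | 0 < G.degree v} := by
    have := sum_le_sum hdart
    rwa [hsum_const, sum_dart_inv_degree_add_inv_degree, mul_le_mul_iff_right₀ two_pos] at this
  have hle_card : (#{v | 0 < G.degree v} : K) ≤ Fintype.card V :=
    Nat.cast_le.2 (card_le_univ _)
  rw [← hvertices, ← hedges]
  exact ⟨fun h ↦ ⟨hle_card.antisymm (h ▸ hle_edges), hle_edges.antisymm (h ▸ hle_card)⟩,
    fun h ↦ h.2.trans h.1⟩

end DartSum

namespace IsSI

variable {V : Type*} [Fintype V] {G : SimpleGraph V} [DecidableRel G.Adj] {k : ℕ} {u v : V}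

lemma degree_eq_add_or_s11 (hSI : IsSI G k) (huv : G.Adj u v) :
    G.degree u = G.degree v + k ∨ G.degree v = G.degree u + k := by
  rcases (abs_eq k.cast_nonneg).1 (hSI huv) with h | h <;> omega

lemma lt_max_degree_degree (hSI : IsSI G k) (huv : G.Adj u v) :
    k < max (G.degree u) (G.degree v) := by
  have := huv.degree_pos_left
  have := huv.degree_pos_right
  have := hSI.degree_eq_add_or_s11 huv
  omega

lemma lt_maxDegree (hSI : IsSI G k) (huv : G.Adj u v) : k < G.maxDegree :=
  (hSI.lt_max_degree_degree huv).trans_le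
    (max_le (G.degree_le_maxDegree u) (G.degree_le_maxDegree v))

lemma degree_add_eq_maxDegree (hSI : IsSI G k) (huv : G.Adj u v) (hu : G.degree u = G.maxDegree) :
    G.degree v + k = G.maxDegree := by
  have := G.degree_le_maxDegree v
  have := hSI.degree_eq_add_or_s11 huv
  omega

lemma inv_degree_add_inv_degree {K : Type*} [DivisionRing K] (hSI : IsSI G k) (huv : G.Adj u v) :
    (G.degree u : K)⁻¹ + (G.degree v : K)⁻¹ =
      ((max (G.degree u) (G.degree v) : ℕ) - k : K)⁻¹ +
        ((max (G.degree u) (G.degree v) : ℕ) : K)⁻¹ := by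
  rcases hSI.degree_eq_add_or_s11 huv with h | h
  · rw [max_eq_left (by omega), h, Nat.cast_add, add_sub_cancel_right, add_comm]
  · rw [max_eq_right (by omega), h, Nat.cast_add, add_sub_cancel_right]

section OrderedField

variable {K : Type*} [Field K] [LinearOrder K] [IsStrictOrderedRing K]

lemma le_inv_degree_add_inv_degree (hSI : IsSI G k) (huv : G.Adj u v) :
    (G.maxDegree - k : K)⁻¹ + (G.maxDegree : K)⁻¹ ≤
      (G.degree u : K)⁻¹ + (G.degree v : K)⁻¹ := by
  rw [hSI.inv_degree_add_inv_degree huv]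
  exact (strictAntiOn_inv_sub_add_inv k.cast_nonneg).antitoneOn
    (Nat.cast_lt.2 (hSI.lt_max_degree_degree huv)) (Nat.cast_lt.2 (hSI.lt_maxDegree huv))
    (Nat.cast_le.2 (max_le (G.degree_le_maxDegree u) (G.degree_le_maxDegree v)))

lemma eq_inv_degree_add_inv_degree_iff (hSI : IsSI G k) (huv : G.Adj u v) :
    (G.maxDegree - k : K)⁻¹ + (G.maxDegree : K)⁻¹ = (G.degree u : K)⁻¹ + (G.degree v : K)⁻¹ ↔
      max (G.degree u) (G.degree v) = G.maxDegree := by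
  rw [hSI.inv_degree_add_inv_degree huv]
  exact ((strictAntiOn_inv_sub_add_inv k.cast_nonneg).eq_iff_eq
    (Nat.cast_lt.2 (hSI.lt_maxDegree huv)) (Nat.cast_lt.2 (hSI.lt_max_degree_degree huv))).trans
    Nat.cast_inj

end OrderedField

lemma forall_degree_eq_maxDegree_or_iff (hSI : IsSI G k) (hk : k < G.maxDegree) :
    (∀ v, G.degree v = G.maxDegree ∨ G.degree v + k = G.maxDegree) ↔
      (∀ v, 0 < G.degree v) ∧
        ∀ ⦃u v⦄, G.Adj u v → max (G.degree u) (G.degree v) = G.maxDegree := by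
  constructor
  · refine fun h ↦ ⟨fun v ↦ ?_, fun u v huv ↦ ?_⟩
    · have := h v
      omega
    · have := h u
      have := h v
      have := hSI.degree_eq_add_or_s11 huv
      omega
  · rintro ⟨hpos, hmax⟩ v
    obtain ⟨u, hvu⟩ := (G.degree_pos_iff_exists_adj v).1 (hpos v)
    have := hmax hvu
    have := hSI.degree_eq_add_or_s11 hvu
    omega

lemma pair_subset_image_degree (hSI : IsSI G k) (huv : G.Adj u v) :
    {G.maxDegree, G.maxDegree - k} ⊆ univ.image fun w ↦ G.degree w := by
  have : Nonempty V := ⟨u⟩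
  obtain ⟨x, hx⟩ := G.exists_maximal_degree_vertex
  have hx_pos : 0 < G.degree x := hx ▸ (Nat.zero_le k).trans_lt (hSI.lt_maxDegree huv)
  obtain ⟨y, hxy⟩ := (G.degree_pos_iff_exists_adj x).1 hx_pos
  have hy := hSI.degree_add_eq_maxDegree hxy hx.symm
  simp only [insert_subset_iff, singleton_subset_iff, mem_image, mem_univ, true_and]
  exact ⟨⟨x, hx.symm⟩, ⟨y, Nat.eq_sub_of_add_eq hy⟩⟩

lemma card_image_degree_eq_two_iff (hSI : IsSI G k) (hk : 1 ≤ k) (huv : G.Adj u v) :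
    #(univ.image fun w ↦ G.degree w) = 2 ↔
      ∀ w, G.degree w = G.maxDegree ∨ G.degree w + k = G.maxDegree := by
  have hlt := hSI.lt_maxDegree huv
  have hsub := hSI.pair_subset_image_degree huv
  have hcard : #{G.maxDegree, G.maxDegree - k} = 2 := card_pair (by omega)
  have hmem (w : V) : G.degree w ∈ ({G.maxDegree, G.maxDegree - k} : Finset ℕ) ↔
      G.degree w = G.maxDegree ∨ G.degree w + k = G.maxDegree := by
    rw [mem_insert, mem_singleton, eq_tsub_iff_add_eq_of_le hlt.le]
  calc #(univ.image fun w ↦ G.degree w) = 2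
    _ ↔ (univ.image fun w ↦ G.degree w) ⊆ {G.maxDegree, G.maxDegree - k} := by
      rw [← hcard]
      exact ⟨fun h ↦ (eq_of_subset_of_card_le hsub h.le).ge,
        fun h ↦ congrArg card (h.antisymm hsub)⟩
    _ ↔ ∀ w, G.degree w = G.maxDegree ∨ G.degree w + k = G.maxDegree := by
      simp only [image_subset_iff, mem_univ, true_imp_iff, hmem]

end IsSI

/-- For a `k`-stepwise irregular graph on `n` vertices with at least one edge:
`m = n·Δ·(Δ − k)/(2Δ − k)` holds iff `G` has exactly two distinct degrees. -/
theorem ksi_size_eq_iff {V : Type*} [Fintype V] [DecidableEq V]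
    (G : SimpleGraph V) [DecidableRel G.Adj]
    (k : ℕ) (hk : 1 ≤ k) (hSI : IsSI G k) (he : ∃ u v, G.Adj u v) :
    (G.edgeFinset.card : ℝ) =
        (Fintype.card V : ℝ) * G.maxDegree * ((G.maxDegree : ℝ) - k) /
          (2 * (G.maxDegree : ℝ) - k) ↔
      (Finset.univ.image fun v => G.degree v).card = 2 := by
  obtain ⟨u, v, huv⟩ := he
  have hk_lt : (k : ℝ) < G.maxDegree := Nat.cast_lt.2 (hSI.lt_maxDegree huv)
  have hΔ_pos : (0 : ℝ) < G.maxDegree := k.cast_nonneg.trans_lt hk_lt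
  have hsub_pos : (0 : ℝ) < G.maxDegree - k := sub_pos.2 hk_lt
  have hweight : (G.edgeFinset.card : ℝ) =
      (Fintype.card V : ℝ) * G.maxDegree * ((G.maxDegree : ℝ) - k) /
        (2 * (G.maxDegree : ℝ) - k) ↔
      #G.edgeFinset * ((G.maxDegree - k : ℝ)⁻¹ + (G.maxDegree : ℝ)⁻¹) = Fintype.card V := by
    rw [two_mul, add_sub_assoc]
    exact eq_mul_mul_div_add_iff hΔ_pos.ne' hsub_pos.ne' (add_pos hΔ_pos hsub_pos).ne'
  rw [hweight, card_edgeFinset_mul_eq_card_iff G fun _ _ ↦ hSI.le_inv_degree_add_inv_degree,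
    hSI.card_image_degree_eq_two_iff hk huv,
    hSI.forall_degree_eq_maxDegree_or_iff (hSI.lt_maxDegree huv)]
  exact and_congr_right' <| forall₂_congr fun _ _ ↦
    forall_congr' hSI.eq_inv_degree_add_inv_degree_iff
end

section
/- Let k ≥ 1 be an integer and let G be a k-stepwise irregular graph on n vertices with at least one edge and maximum degree Δ = Δ(G). Let a_1 be the number of vertices of G of degree Δ − k. Then a_1·(2Δ − k) ≤ n·Δ. -/
open SimpleGraph Finset

/-!
Vertices of equal degree form an independent set in a `k`-stepwise irregular graph, as `k ≥ 1`.
Every edge at an independent set `A` ends outside `A`, so the degree sum over `A` is at most the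
degree sum over the complement, hence at most `(n - |A|) * Δ`. If every vertex of `A` has degree at
least `d`, then `|A| * d ≤ (n - |A|) * Δ`; take `d = Δ - k`.
-/

section

variable {V : Type*} {G : SimpleGraph V}

theorem sum_degree_le_sum_degree_of_neighborFinset_subset [G.LocallyFinite] {s t : Finset V}
    (hst : ∀ v ∈ s, G.neighborFinset v ⊆ t) :
    ∑ v ∈ s, G.degree v ≤ ∑ w ∈ t, G.degree w := by
  classical
  have degree_le_card_above : ∀ v ∈ s, G.degree v ≤ #(t.bipartiteAbove G.Adj v) := fun v hv =>
    card_le_card fun w hw =>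
      (mem_bipartiteAbove _).2 ⟨hst v hv hw, (G.mem_neighborFinset v w).1 hw⟩
  have card_below_le_degree : ∀ w ∈ t, #(s.bipartiteBelow G.Adj w) ≤ G.degree w := fun w _ =>
    card_le_card fun v hv => (G.mem_neighborFinset w v).2 ((mem_bipartiteBelow _).1 hv).2.symm
  calc ∑ v ∈ s, G.degree v
      ≤ ∑ v ∈ s, #(t.bipartiteAbove G.Adj v) := sum_le_sum degree_le_card_above
    _ = ∑ w ∈ t, #(s.bipartiteBelow G.Adj w) :=
        sum_card_bipartiteAbove_eq_sum_card_bipartiteBelow _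
    _ ≤ ∑ w ∈ t, G.degree w := sum_le_sum card_below_le_degree

variable [Fintype V] [DecidableRel G.Adj]

theorem sum_degree_le_sum_degree_compl_of_isIndepSet [DecidableEq V] {A : Finset V}
    (hA : G.IsIndepSet A) : ∑ v ∈ A, G.degree v ≤ ∑ w ∈ Aᶜ, G.degree w := by
  refine sum_degree_le_sum_degree_of_neighborFinset_subset fun v hv w hvw => ?_
  refine mem_compl.2 fun hw => ?_
  have hadj : G.Adj v w := (G.mem_neighborFinset v w).1 hvw
  exact hA hv hw hadj.ne hadj

theorem sum_degree_le_card_mul_maxDegree (s : Finset V) :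
    ∑ v ∈ s, G.degree v ≤ #s * G.maxDegree :=
  sum_le_card_nsmul s _ _ fun v _ => G.degree_le_maxDegree v

theorem IsSI.degree_ne {k : ℕ} (hSI : IsSI G k) (hk : k ≠ 0) {u v : V} (huv : G.Adj u v) :
    G.degree u ≠ G.degree v := by
  intro hdeg
  have habs := hSI huv
  rw [hdeg, sub_self, abs_zero] at habs
  exact hk (Nat.cast_eq_zero.1 habs.symm)

theorem IsSI.isIndepSet_filter_degree_eq {k : ℕ} (hSI : IsSI G k) (hk : k ≠ 0) (d : ℤ) :
    G.IsIndepSet ({v | (G.degree v : ℤ) = d} : Finset V) := by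
  intro u hu v hv _ huv
  rw [mem_coe, mem_filter_univ] at hu hv
  exact hSI.degree_ne hk huv (Nat.cast_injective (hu.trans hv.symm))

theorem ksi_a1_upper_general {A : Finset V} (hA : G.IsIndepSet A) {d : ℤ}
    (hd : ∀ v ∈ A, d ≤ G.degree v) :
    (#A : ℤ) * (G.maxDegree + d) ≤ (Fintype.card V : ℤ) * G.maxDegree := by
  classical
  have card_mul_le : (#A : ℤ) * d ≤ ∑ v ∈ A, (G.degree v : ℤ) := by
    simpa only [nsmul_eq_mul] using card_nsmul_le_sum A _ d hd
  have sum_le : ∑ v ∈ A, (G.degree v : ℤ) ≤ #Aᶜ * G.maxDegree := by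
    exact_mod_cast (sum_degree_le_sum_degree_compl_of_isIndepSet hA).trans
      (sum_degree_le_card_mul_maxDegree Aᶜ)
  calc (#A : ℤ) * (G.maxDegree + d)
      = #A * G.maxDegree + #A * d := mul_add _ _ _
    _ ≤ #A * G.maxDegree + #Aᶜ * G.maxDegree := by grw [card_mul_le, sum_le]
    _ = (Fintype.card V : ℤ) * G.maxDegree := by
        rw [← add_mul, ← Nat.cast_add, card_add_card_compl]

end

/-- In a `k`-stepwise irregular graph on `n` vertices with at least one edge, with
`a₁` the number of vertices of degree `Δ − k`, we have `a₁·(2Δ − k) ≤ n·Δ`. -/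
theorem ksi_a1_upper {V : Type*} [Fintype V] (G : SimpleGraph V) [DecidableRel G.Adj]
    (k : ℕ) (hk : 1 ≤ k) (hSI : IsSI G k) (he : ∃ u v, G.Adj u v) :
    ((Finset.univ.filter fun v => (G.degree v : ℤ) = (G.maxDegree : ℤ) - k).card : ℤ) *
        (2 * (G.maxDegree : ℤ) - k) ≤
      (Fintype.card V : ℤ) * G.maxDegree := by
  have hA := hSI.isIndepSet_filter_degree_eq (Nat.one_le_iff_ne_zero.1 hk) (G.maxDegree - k)
  linarith [ksi_a1_upper_general hA fun v hv => ((mem_filter_univ v).1 hv).ge]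
end
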